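/- arXiv:1605.08926 — 2 statements merged into one kernel-verified Lean document; each statement's English description precedes it below -/
import Mathlib

section
/- (Price convergence in the bid–price iteration.) Suppose sequences (λ^k) in ℝ^m and (u^k) with u_i^k ∈ K_i are generated by: λ^{k+1} = λ^k + (1/k)(Σ_{i=1}^M E_i u_i^k − d), where u_i^k is a minimizer over K_i of u_i ↦ c_i(u_i) + e_i(u_i) + (λ^{k})ᵀE_i u_i. Then λ^k converges as k → ∞ to a point λ* that maximizes the dual function D(λ) = min_{u: u_i ∈ K_i ∀i} [Σ_i (c_i(u_i) + e_i(u_i) + λᵀE_i u_i) − λᵀd] over λ ∈ ℝ^m. -/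
/-!
The iteration is subgradient ascent for the concave dual function `D` with steps `1/k`: the
residual `∑ Eᵢuᵢᵏ - d` is a supergradient of `D` at `λᵏ`, bounded because the sets `Kᵢ` are
compact.

*A dual maximizer exists* (`exists_multiplier`). Slater's condition is strict only in the
constraints `hᵢ`, so a multiplier for the affine coupling constraint is obtained in two steps.
Hahn–Banach separates the strict epigraph of the cost over `{h < 0}` from the part at or below the
optimal value of the polyhedral set `{Fu ≤ g, Eu = d}`; this produces an affine minorant of the
cost on `{h ≤ 0}` that is at least the optimal value on the polyhedron. The equality constraints
are then dualized for this affine function by Farkas' lemma (`affine_farkas`). Hence the dual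
optimal value is attained and equals the primal one.

*The prices converge* (`subgradient_tendsto`). For every maximizer `μ`,
`‖λᵏ⁺¹ - μ‖² ≤ ‖λᵏ - μ‖² - (2/k)(D(μ) - D(λᵏ)) + B/k²`. As `∑ 1/k²` converges, `‖λᵏ - μ‖`
converges; as `∑ 1/k` diverges, the gap `D(μ) - D(λᵏ)` tends to `0` along a subsequence. A limit
point of that subsequence is a maximizer by upper semicontinuity of `D`, and taking it as `μ`
shows that the whole sequence converges to it.
-/

open Matrix Filter

/-! ### Farkas' lemma -/

/-- **Farkas' lemma**, over a finite index set and an arbitrary real vector space. In the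
induction step a point `x₀` violating the implication for the smaller system is used to project
along `x₀` onto the kernel of the new functional. -/
theorem farkas {V ι : Type*} [AddCommGroup V] [Module ℝ V] (s : Finset ι) :
    ∀ (a : ι → V →ₗ[ℝ] ℝ) (b : V →ₗ[ℝ] ℝ), (∀ x, (∀ i ∈ s, a i x ≤ 0) → b x ≤ 0) →
      ∃ w : ι → ℝ, (∀ i, 0 ≤ w i) ∧ ∀ x, b x = ∑ i ∈ s, w i * a i x := by
  classical
  induction s using Finset.induction_on with
  | empty =>
    intro a b h
    refine ⟨0, fun _ => le_rfl, fun x => ?_⟩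
    have h1 := h x (by simp)
    have h2 := h (-x) (by simp)
    rw [map_neg] at h2
    simp only [Finset.sum_empty]
    linarith
  | insert j s hj ih =>
    intro a b h
    by_cases hb : ∀ x, (∀ i ∈ s, a i x ≤ 0) → b x ≤ 0
    · obtain ⟨w, hw, hbw⟩ := ih a b hb
      refine ⟨fun i => if i = j then 0 else w i, fun i => ?_, fun x => ?_⟩
      · dsimp only
        split_ifs
        exacts [le_rfl, hw i]
      · rw [Finset.sum_insert hj, hbw]
        simp only [if_true, zero_mul, zero_add]
        refine Finset.sum_congr rfl fun i hi => ?_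
        rw [if_neg (ne_of_mem_of_not_mem hi hj)]
    · push Not at hb
      obtain ⟨x₀, hx₀, hbx₀⟩ := hb
      have haj : 0 < a j x₀ := by
        by_contra! hle
        have := h x₀ (fun i hi => by
          rcases Finset.mem_insert.1 hi with rfl | hi
          exacts [hle, hx₀ i hi])
        linarith
      obtain ⟨w, hw, hbw⟩ := ih (fun i => a i - (a i x₀ / a j x₀) • a j)
        (b - (b x₀ / a j x₀) • a j) (by
          intro x hx
          have := h (x - (a j x / a j x₀) • x₀) (fun i hi => by
            rcases Finset.mem_insert.1 hi with rfl | hi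
            · simp only [map_sub, map_smul, smul_eq_mul]
              rw [div_mul_cancel₀ _ haj.ne', sub_self]
            · have := hx i hi
              simp only [LinearMap.sub_apply, LinearMap.smul_apply, smul_eq_mul] at this
              simp only [map_sub, map_smul, smul_eq_mul]
              convert this using 2
              ring)
          simp only [map_sub, map_smul, smul_eq_mul] at this
          simp only [LinearMap.sub_apply, LinearMap.smul_apply, smul_eq_mul]
          convert this using 2
          ring)
      have hsum : ∑ i ∈ s, w i * a i x₀ ≤ 0 :=
        Finset.sum_nonpos fun i hi => mul_nonpos_of_nonneg_of_nonpos (hw i) (hx₀ i hi)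
      refine ⟨fun i => if i = j then (b x₀ - ∑ i ∈ s, w i * a i x₀) / a j x₀ else w i,
        fun i => ?_, fun x => ?_⟩
      · dsimp only
        split_ifs
        · exact div_nonneg (by linarith) haj.le
        · exact hw i
      · have h1 := hbw x
        simp only [LinearMap.sub_apply, LinearMap.smul_apply, smul_eq_mul] at h1
        have h2 : ∑ i ∈ s, w i * (a i x - a i x₀ / a j x₀ * a j x)
            = ∑ i ∈ s, w i * a i x - (∑ i ∈ s, w i * a i x₀) / a j x₀ * a j x := by
          rw [Finset.sum_div, Finset.sum_mul, ← Finset.sum_sub_distrib]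
          exact Finset.sum_congr rfl fun i _ => by ring
        have h3 : ∑ i ∈ s, (if i = j then (b x₀ - ∑ i ∈ s, w i * a i x₀) / a j x₀ else w i) * a i x
            = ∑ i ∈ s, w i * a i x :=
          Finset.sum_congr rfl fun i hi => by rw [if_neg (ne_of_mem_of_not_mem hi hj)]
        rw [Finset.sum_insert hj, h3]
        simp only [if_true]
        rw [h2] at h1
        linear_combination h1

/-- A real number `x` is nonnegative as soon as `0 ≤ x + s * y` for all small `s > 0`. -/
theorem nonneg_of_forall_add_mul {x y : ℝ} (h : ∀ s, 0 < s → s ≤ 1 → 0 ≤ x + s * y) : 0 ≤ x := by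
  by_contra! hx
  have hd : 0 < |y| - x + 1 := by linarith [abs_nonneg y]
  have h1 := h (-x / (|y| - x + 1)) (div_pos (by linarith) hd)
    ((div_le_one hd).2 (by linarith [abs_nonneg y]))
  have h2 : x + -x / (|y| - x + 1) * y = x * (|y| - x + 1 - y) / (|y| - x + 1) := by
    field_simp
    ring
  rw [h2] at h1
  have h3 : x * (|y| - x + 1 - y) < 0 :=
    mul_neg_of_neg_of_pos hx (by linarith [le_abs_self y])
  linarith [div_neg_of_neg_of_pos h3 hd]

/-- Affine Farkas lemma: a linear inequality valid on a nonempty polyhedron is dominated by a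
nonnegative combination of the defining inequalities. It is `farkas` for the homogenized system
on `V × ℝ`. -/
theorem affine_farkas {V ι : Type*} [AddCommGroup V] [Module ℝ V] [Fintype ι]
    (a : ι → V →ₗ[ℝ] ℝ) (r : ι → ℝ) (b : V →ₗ[ℝ] ℝ) (β : ℝ)
    (x₀ : V) (hx₀ : ∀ i, a i x₀ ≤ r i) (h : ∀ x, (∀ i, a i x ≤ r i) → b x ≤ β) :
    ∃ w : ι → ℝ, (∀ i, 0 ≤ w i) ∧ ∀ x, b x - β ≤ ∑ i, w i * (a i x - r i) := by
  -- The index `none` stands for the constraint `0 ≤ t` on the homogenizing variable.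
  obtain ⟨w, hw, hbw⟩ := farkas (V := V × ℝ) (Finset.univ : Finset (Option ι))
    (fun o => o.elim (-LinearMap.snd ℝ V ℝ)
      (fun i => (a i).comp (LinearMap.fst ℝ V ℝ) - r i • LinearMap.snd ℝ V ℝ))
    (b.comp (LinearMap.fst ℝ V ℝ) - β • LinearMap.snd ℝ V ℝ) (by
      rintro ⟨x, t⟩ hx
      have ht : 0 ≤ t := by simpa using hx none (Finset.mem_univ _)
      have hi : ∀ i, a i x - r i * t ≤ 0 := fun i => by simpa using hx (some i) (Finset.mem_univ _)
      suffices b x - β * t ≤ 0 by simpa using this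
      -- Moving from `x₀` a little towards `(x, t)` gives a point with positive last coordinate.
      have key : ∀ s, 0 < s → s ≤ 1 → 0 ≤ (β * t - b x) + s * (β - b x₀) := by
        intro s hs _
        have hpos : 0 < t + s := by linarith
        have := h ((t + s)⁻¹ • (x + s • x₀)) (fun i => by
          simp only [map_smul, map_add, smul_eq_mul]
          rw [inv_mul_le_iff₀ hpos]
          nlinarith [hi i, hx₀ i])
        simp only [map_smul, map_add, smul_eq_mul] at this
        rw [inv_mul_le_iff₀ hpos] at this
        linarith
      linarith [nonneg_of_forall_add_mul key])
  refine ⟨fun i => w (some i), fun i => hw _, fun x => ?_⟩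
  have := hbw (x, 1)
  simp [Fintype.sum_option] at this
  rw [this]
  linarith [hw none]

/-! ### Lagrange multipliers under the refined Slater condition -/

/-- Existence of Lagrange multipliers for the affine equality constraints under the refined
Slater condition: strict inequality is only required in the nonaffine constraints `H`. -/
theorem exists_multiplier {V I J κ : Type*} [NormedAddCommGroup V] [NormedSpace ℝ V]
    [Fintype I] [Finite J] [Fintype κ]
    (f : V → ℝ) (hf : ConvexOn ℝ Set.univ f) (hfc : Continuous f)
    (H : J → V → ℝ) (hH : ∀ j, ConvexOn ℝ Set.univ (H j)) (hHc : ∀ j, Continuous (H j))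
    (a : I → V →ₗ[ℝ] ℝ) (r : I → ℝ) (A : κ → V →ₗ[ℝ] ℝ) (d : κ → ℝ)
    (u₀ : V) (h₀a : ∀ i, a i u₀ ≤ r i) (h₀H : ∀ j, H j u₀ < 0) (h₀A : ∀ k, A k u₀ = d k)
    (P : ℝ) (hP : ∀ u, (∀ i, a i u ≤ r i) → (∀ j, H j u ≤ 0) → (∀ k, A k u = d k) → P ≤ f u) :
    ∃ l : κ → ℝ, ∀ u, (∀ i, a i u ≤ r i) → (∀ j, H j u ≤ 0) →
      P ≤ f u + ∑ k, l k * (A k u - d k) := by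
  -- Separate the open strict epigraph of `f` over `{H < 0}` from the polyhedral part below `P`.
  let W : Set (V × ℝ) := {z | (∀ j, H j z.1 < 0) ∧ f z.1 < z.2}
  let Q : Set (V × ℝ) := {z | ((∀ i, a i z.1 ≤ r i) ∧ ∀ k, A k z.1 = d k) ∧ z.2 ≤ P}
  have hWo : IsOpen W := by
    have h1 : IsOpen {z : V × ℝ | ∀ j, H j z.1 < 0} := by
      rw [Set.ofPred_forall]
      exact isOpen_iInter_of_finite fun j =>
        isOpen_lt ((hHc j).comp continuous_fst) continuous_const
    exact h1.inter (isOpen_lt (hfc.comp continuous_fst) continuous_snd)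
  have hWc : Convex ℝ W := by
    rintro x ⟨hx1, hx2⟩ y ⟨hy1, hy2⟩ α β hα hβ hαβ
    have pos : ∀ p q : ℝ, 0 < p → 0 < q → 0 < α * p + β * q := by
      intro p q hp hq
      rcases hα.eq_or_lt with rfl | hα'
      · have : β = 1 := by linarith
        subst this; linarith
      · have := mul_pos hα' hp
        have := mul_nonneg hβ hq.le
        linarith
    refine ⟨fun j => ?_, ?_⟩
    · have h1 := (hH j).2 (Set.mem_univ x.1) (Set.mem_univ y.1) hα hβ hαβ
      have h2 := pos (-H j x.1) (-H j y.1) (by linarith [hx1 j]) (by linarith [hy1 j])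
      simp only [smul_eq_mul] at h1
      change H j (α • x.1 + β • y.1) < 0
      linarith
    · have h1 := hf.2 (Set.mem_univ x.1) (Set.mem_univ y.1) hα hβ hαβ
      have h2 := pos (x.2 - f x.1) (y.2 - f y.1) (by linarith) (by linarith)
      simp only [smul_eq_mul] at h1
      change f (α • x.1 + β • y.1) < α • x.2 + β • y.2
      simp only [smul_eq_mul]
      linarith
  have hQc : Convex ℝ Q := by
    rintro x ⟨⟨hx1, hx2⟩, hx3⟩ y ⟨⟨hy1, hy2⟩, hy3⟩ α β hα hβ hαβ
    refine ⟨⟨fun i => ?_, fun k => ?_⟩, ?_⟩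
    · change a i (α • x.1 + β • y.1) ≤ r i
      simp only [map_add, map_smul, smul_eq_mul]
      calc α * a i x.1 + β * a i y.1 ≤ α * r i + β * r i :=
            add_le_add (mul_le_mul_of_nonneg_left (hx1 i) hα)
              (mul_le_mul_of_nonneg_left (hy1 i) hβ)
        _ = r i := by rw [← add_mul, hαβ, one_mul]
    · change A k (α • x.1 + β • y.1) = d k
      simp only [map_add, map_smul, smul_eq_mul]
      rw [hx2, hy2, ← add_mul, hαβ, one_mul]
    · change α • x.2 + β • y.2 ≤ P
      simp only [smul_eq_mul]
      calc α * x.2 + β * y.2 ≤ α * P + β * P :=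
            add_le_add (mul_le_mul_of_nonneg_left hx3 hα) (mul_le_mul_of_nonneg_left hy3 hβ)
        _ = P := by rw [← add_mul, hαβ, one_mul]
  have hdisj : Disjoint W Q := by
    rw [Set.disjoint_left]
    rintro z ⟨h1, h2⟩ ⟨⟨h3, h4⟩, h5⟩
    linarith [hP z.1 h3 (fun j => (h1 j).le) h4]
  obtain ⟨ψ, γ, hW, hQ⟩ := geometric_hahn_banach_open hWc hWo hQc hdisj
  set τ : ℝ := ψ (0, 1) with hτ
  have hψ : ∀ v t, ψ (v, t) = ψ (v, 0) + t * τ := by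
    intro v t
    have : ((v, t) : V × ℝ) = (v, 0) + t • (0, 1) := by simp
    rw [this, map_add, map_smul, smul_eq_mul]
  -- The separating hyperplane is not vertical since `u₀` lies in both projections to `V`.
  have hQ₀ : γ ≤ ψ (u₀, 0) + P * τ := by
    rw [← hψ]; exact hQ (u₀, P) ⟨⟨h₀a, h₀A⟩, le_rfl⟩
  have hτneg : τ < 0 := by
    have hPf := hP u₀ h₀a (fun j => (h₀H j).le) h₀A
    have h1 := hW (u₀, f u₀ + 1) ⟨h₀H, by simp⟩
    rw [hψ] at h1
    by_contra! h
    nlinarith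
  -- `f` dominates the affine function cut out by the hyperplane, first on `{H < 0}`, ...
  have hW' : ∀ v, (∀ j, H j v < 0) → ψ (v, 0) + f v * τ ≤ γ := by
    intro v hv
    have key : ∀ s, 0 < s → s ≤ 1 → 0 ≤ (γ - ψ (v, 0) - f v * τ) + s * (-τ) := by
      intro s hs _
      have := hW (v, f v + s) ⟨hv, by simpa using hs⟩
      rw [hψ] at this
      linarith
    linarith [nonneg_of_forall_add_mul key]
  -- ... and then on `{H ≤ 0}`, moving along the segment towards `u₀`.
  have hW'' : ∀ v, (∀ j, H j v ≤ 0) → ψ (v, 0) + f v * τ ≤ γ := by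
    intro v hv
    have key : ∀ s, 0 < s → s ≤ 1 → 0 ≤ (γ - ψ (v, 0) - f v * τ) +
        s * (ψ (v, 0) + f v * τ - ψ (u₀, 0) - f u₀ * τ) := by
      intro s hs hs1
      have hc := hW' ((1 - s) • v + s • u₀) (fun j => by
        have h1 := (hH j).2 (Set.mem_univ v) (Set.mem_univ u₀) (by linarith : 0 ≤ 1 - s) hs.le
          (by ring)
        simp only [smul_eq_mul] at h1
        have h2 := mul_nonneg (by linarith : 0 ≤ 1 - s) (neg_nonneg.2 (hv j))
        have h3 := mul_pos hs (neg_pos.2 (h₀H j))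
        linarith)
      have h1 := hf.2 (Set.mem_univ v) (Set.mem_univ u₀) (by linarith : 0 ≤ 1 - s) hs.le
        (by ring)
      simp only [smul_eq_mul] at h1
      have h2 : (((1 - s) • v + s • u₀, 0) : V × ℝ) = (1 - s) • (v, 0) + s • (u₀, 0) := by simp
      rw [h2, map_add, map_smul, map_smul, smul_eq_mul, smul_eq_mul] at hc
      have h3 := mul_le_mul_of_nonpos_right h1 hτneg.le
      linarith
    linarith [nonneg_of_forall_add_mul key]
  -- On the polyhedron the affine function is at least `P`; dualize the equality constraints.
  obtain ⟨w, hw, hbw⟩ := affine_farkas (ι := I ⊕ κ ⊕ κ)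
    (Sum.elim a (Sum.elim A (fun k => -A k))) (Sum.elim r (Sum.elim d (fun k => -d k)))
    (-(ψ.toLinearMap.comp (LinearMap.inl ℝ V ℝ))) (P * τ - γ) u₀
    (by rintro (i | k | k) <;> simp [h₀a, h₀A])
    (by
      intro x hx
      have h1 : ∀ i, a i x ≤ r i := fun i => by simpa using hx (Sum.inl i)
      have h2 : ∀ k, A k x ≤ d k := fun k => by simpa using hx (Sum.inr (Sum.inl k))
      have h3 : ∀ k, d k ≤ A k x := fun k => by simpa using hx (Sum.inr (Sum.inr k))
      have := hQ (x, P) ⟨⟨h1, fun k => le_antisymm (h2 k) (h3 k)⟩, le_rfl⟩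
      rw [hψ] at this
      simp only [LinearMap.neg_apply, LinearMap.comp_apply, LinearMap.inl_apply,
        ContinuousLinearMap.coe_coe]
      linarith)
  refine ⟨fun k => (w (Sum.inr (Sum.inl k)) - w (Sum.inr (Sum.inr k))) / (-τ), fun u hu hHu => ?_⟩
  have h1 := hbw u
  simp only [Fintype.sum_sum_type, Sum.elim_inl, Sum.elim_inr, LinearMap.neg_apply,
    LinearMap.comp_apply, LinearMap.inl_apply, ContinuousLinearMap.coe_coe] at h1
  have h2 : ∑ i, w (Sum.inl i) * (a i u - r i) ≤ 0 :=
    Finset.sum_nonpos fun i _ =>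
      mul_nonpos_of_nonneg_of_nonpos (hw _) (by linarith [hu i])
  have h3 := hW'' u hHu
  have h4 : (-τ) * ∑ k, (w (Sum.inr (Sum.inl k)) - w (Sum.inr (Sum.inr k))) / (-τ) * (A k u - d k)
      = ∑ k, w (Sum.inr (Sum.inl k)) * (A k u - d k)
        + ∑ k, w (Sum.inr (Sum.inr k)) * (-A k u - -d k) := by
    rw [Finset.mul_sum, ← Finset.sum_add_distrib]
    refine Finset.sum_congr rfl fun k _ => ?_
    have : τ ≠ 0 := hτneg.ne
    field_simp
    ring
  refine le_of_mul_le_mul_left ?_ (neg_pos.2 hτneg)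
  rw [mul_add, h4]
  linarith

/-! ### Convergence of the subgradient iteration -/

open Topology in
/-- Convergence of the subgradient iteration with steps `1/k` and bounded directions `s k`.
Here `Z` is the solution set and `δ k` the optimality gap at `x k`; `hcl` says that a limit point
along which the gap vanishes is a solution. The squared distance to any point of `Z`, corrected
by `B/(k - 1)`, decreases by at least `2 δ k / k` in each step. -/
theorem subgradient_tendsto {X : Type*} [NormedAddCommGroup X] [InnerProductSpace ℝ X]
    [ProperSpace X] (x s : ℕ → X) (δ : ℕ → ℝ) (Z : Set X) (B : ℝ)
    (hx : ∀ k, 1 ≤ k → x (k + 1) = x k + ((1 : ℝ) / k) • s k)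
    (hs : ∀ k, ‖s k‖ ^ 2 ≤ B) (hδ : ∀ k, 0 ≤ δ k)
    (hZ : ∀ z ∈ Z, ∀ k, δ k ≤ inner ℝ (z - x k) (s k)) (hne : Z.Nonempty)
    (hcl : ∀ (φ : ℕ → ℕ) (z : X), Tendsto (δ ∘ φ) atTop (𝓝 0) → Tendsto (x ∘ φ) atTop (𝓝 z) →
      z ∈ Z) :
    ∃ z ∈ Z, Tendsto x atTop (𝓝 z) := by
  have hB : 0 ≤ B := (sq_nonneg _).trans (hs 0)
  -- The Lyapunov function; the shift by `2` lets `1/k²` be dominated by `1/(k-1) - 1/k`.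
  let V : X → ℕ → ℝ := fun z k => ‖x (k + 2) - z‖ ^ 2 + B / (k + 1)
  have hV0 : ∀ z k, 0 ≤ V z k := fun z k => by positivity
  have hstep : ∀ z ∈ Z, ∀ k, V z (k + 1) ≤ V z k - 2 / ((k : ℝ) + 2) * δ (k + 2) := by
    intro z hz k
    have hk : (0 : ℝ) < (k : ℝ) + 2 := by positivity
    have h1 : x (k + 1 + 2) - z = (x (k + 2) - z) + ((1 : ℝ) / (k + 2)) • s (k + 2) := by
      have := hx (k + 2) (by omega)
      push_cast at this
      rw [show k + 1 + 2 = k + 2 + 1 by ring, this]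
      abel
    have h2 := hZ z hz (k + 2)
    have h3 : inner ℝ (x (k + 2) - z) (s (k + 2)) ≤ -δ (k + 2) := by
      rw [← neg_sub z, inner_neg_left]
      linarith
    have h4 : ‖((1 : ℝ) / (k + 2)) • s (k + 2)‖ ^ 2 ≤ B / (k + 2) ^ 2 := by
      rw [norm_smul, mul_pow, Real.norm_eq_abs, sq_abs, div_pow, one_pow, one_div_mul_eq_div]
      exact div_le_div_of_nonneg_right (hs _) (by positivity)
    have h5 : B / ((k : ℝ) + 2) ^ 2 ≤ B / (k + 1) - B / (k + 2) := by
      have : B / ((k : ℝ) + 1) - B / (k + 2) = B / ((k + 1) * (k + 2)) := by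
        field_simp
        ring
      rw [this]
      exact div_le_div_of_nonneg_left hB (by positivity) (by nlinarith)
    have h6 : 2 * ((1 : ℝ) / (k + 2) * inner ℝ (x (k + 2) - z) (s (k + 2)))
        ≤ - (2 / ((k : ℝ) + 2) * δ (k + 2)) := by
      have := mul_le_mul_of_nonneg_left h3 (by positivity : (0 : ℝ) ≤ 2 / (k + 2))
      calc _ = 2 / ((k : ℝ) + 2) * inner ℝ (x (k + 2) - z) (s (k + 2)) := by ring
        _ ≤ _ := by linarith
    have h7 : (((k + 1 : ℕ) : ℝ) + 1) = k + 2 := by push_cast; ring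
    simp only [V]
    rw [h7, h1, norm_add_sq_real, inner_smul_right]
    linarith
  have hanti : ∀ z ∈ Z, Antitone (V z) := fun z hz => antitone_nat_of_succ_le fun k => by
    have := mul_nonneg (by positivity : (0 : ℝ) ≤ 2 / ((k : ℝ) + 2)) (hδ (k + 2))
    linarith [hstep z hz k]
  obtain ⟨z₀, hz₀⟩ := hne
  -- Divergence of the harmonic series forces the gap to be small infinitely often.
  have hfreq : ∀ ε > 0, ∃ᶠ k in atTop, δ (k + 2) < ε := by
    intro ε hε hev
    obtain ⟨N, hN⟩ := eventually_atTop.1 hev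
    have hsumm : Summable fun k : ℕ => 2 * ε / (((k + (N + 2) : ℕ)) : ℝ) := by
      refine summable_of_sum_range_le (c := V z₀ N) (fun k => by positivity) fun n => ?_
      have : ∀ n, ∑ k ∈ Finset.range n, 2 * ε / (((k + (N + 2) : ℕ)) : ℝ)
          ≤ V z₀ N - V z₀ (N + n) := by
        intro n
        induction n with
        | zero => simp
        | succ n ih =>
          rw [Finset.sum_range_succ]
          have h1 := hstep z₀ hz₀ (N + n)
          have h2 : ε ≤ δ (N + n + 2) := not_lt.1 (hN (N + n) (by omega))
          have h3 : 2 * ε / (((n + (N + 2) : ℕ)) : ℝ) ≤ 2 / (((N + n : ℕ) : ℝ) + 2) * δ (N + n + 2) := by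
            rw [mul_div_right_comm]
            have : (((n + (N + 2) : ℕ)) : ℝ) = ((N + n : ℕ) : ℝ) + 2 := by push_cast; ring
            rw [this]
            exact mul_le_mul_of_nonneg_left h2 (by positivity)
          rw [← add_assoc N n 1]
          linarith
      linarith [this n, hV0 z₀ (N + n)]
    rw [summable_nat_add_iff (f := fun k : ℕ => 2 * ε / (k : ℝ)) (N + 2)] at hsumm
    refine Real.not_summable_one_div_natCast ?_
    have := hsumm.mul_left ((2 * ε)⁻¹)
    refine this.congr fun k => ?_
    field_simp
  obtain ⟨φ, hφ, hδφ⟩ := extraction_forall_of_frequently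
    (P := fun n k => δ (k + 2) < 1 / ((n : ℝ) + 1)) fun n => hfreq _ (by positivity)
  have hbd : ∀ n, x (φ n + 2) ∈ Metric.closedBall z₀ (Real.sqrt (V z₀ 0)) := by
    intro n
    rw [Metric.mem_closedBall, dist_eq_norm]
    refine Real.le_sqrt_of_sq_le ?_
    have h1 := hanti z₀ hz₀ (Nat.zero_le (φ n))
    have h2 : 0 ≤ B / ((φ n : ℝ) + 1) := by positivity
    have h3 : V z₀ (φ n) = ‖x (φ n + 2) - z₀‖ ^ 2 + B / ((φ n : ℝ) + 1) := rfl
    linarith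
  obtain ⟨z, -, ψ, hψ, hlim⟩ := (isCompact_closedBall z₀ _).tendsto_subseq hbd
  have hδ0 : Tendsto (fun n => δ (φ n + 2)) atTop (𝓝 0) :=
    squeeze_zero (fun n => hδ _) (fun n => (hδφ n).le) tendsto_one_div_add_atTop_nhds_zero_nat
  have hzZ : z ∈ Z := hcl (fun n => φ (ψ n) + 2) z (hδ0.comp hψ.tendsto_atTop) hlim
  refine ⟨z, hzZ, ?_⟩
  -- The Lyapunov function of `z` converges, and its limit along the subsequence is `0`.
  have hBk : Tendsto (fun k : ℕ => B / ((k : ℝ) + 1)) atTop (𝓝 0) := by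
    have := (tendsto_one_div_add_atTop_nhds_zero_nat (𝕜 := ℝ)).const_mul B
    simpa [div_eq_mul_inv] using this
  have hVlim : Tendsto (V z) atTop (𝓝 (⨅ k, V z k)) :=
    tendsto_atTop_ciInf (hanti z hzZ) ⟨0, by rintro _ ⟨k, rfl⟩; exact hV0 z k⟩
  have hφψ : Tendsto (fun n => φ (ψ n)) atTop atTop := hφ.tendsto_atTop.comp hψ.tendsto_atTop
  have hVsub : Tendsto (fun n => V z (φ (ψ n))) atTop (𝓝 0) := by
    have h1 : Tendsto (fun n => ‖x (φ (ψ n) + 2) - z‖ ^ 2) atTop (𝓝 0) := by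
      have := ((tendsto_iff_norm_sub_tendsto_zero.1 hlim)).pow 2
      simpa using this
    simpa using h1.add (hBk.comp hφψ)
  rw [tendsto_nhds_unique (hVlim.comp hφψ) hVsub] at hVlim
  have hsq : Tendsto (fun k => ‖x (k + 2) - z‖ ^ 2) atTop (𝓝 0) := by
    have := hVlim.sub hBk
    simpa [V] using this
  have hnorm : Tendsto (fun k => ‖x (k + 2) - z‖) atTop (𝓝 0) := by
    have := hsq.sqrt
    simpa using this
  exact (tendsto_add_atTop_iff_nat 2).1 (tendsto_iff_norm_sub_tendsto_zero.2 hnorm)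

/-! ### Convergence of the prices -/

/-- Price convergence in the bid–price iteration: if `λ^{k+1} = λ^k + (1/k)(Σᵢ Eᵢuᵢᵏ - d)`
where each `uᵢᵏ` is a minimizer over `Kᵢ` of `uᵢ ↦ cᵢ(uᵢ) + eᵢ(uᵢ) + (λᵏ)ᵀEᵢuᵢ`, then
`λᵏ` converges to a maximizer `λ*` of the dual function
`D(λ) = min_{u : uᵢ ∈ Kᵢ ∀i} [Σᵢ (cᵢ(uᵢ) + eᵢ(uᵢ) + λᵀEᵢuᵢ) - λᵀd]`. -/
theorem stmt2 (M m : ℕ) (n p q : Fin M → ℕ)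
    (c e : ∀ i, (Fin (n i) → ℝ) → ℝ)
    (hc : ∀ i, ConvexOn ℝ Set.univ (c i)) (hccont : ∀ i, Continuous (c i))
    (he : ∀ i, ConvexOn ℝ Set.univ (e i)) (hecont : ∀ i, Continuous (e i))
    (F : ∀ i, Matrix (Fin (q i)) (Fin (n i)) ℝ) (g : ∀ i, Fin (q i) → ℝ)
    (h : ∀ i, (Fin (n i) → ℝ) → (Fin (p i) → ℝ))
    (hh : ∀ i j, ConvexOn ℝ Set.univ (fun v => h i v j))
    (hhcont : ∀ i, Continuous (h i))
    (K : ∀ i, Set (Fin (n i) → ℝ))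
    (hK : ∀ i, K i = {v : Fin (n i) → ℝ | (F i).mulVec v ≤ g i ∧ h i v ≤ 0})
    (hKne : ∀ i, (K i).Nonempty) (hKcpt : ∀ i, IsCompact (K i))
    (E : ∀ i, Matrix (Fin m) (Fin (n i)) ℝ) (d : Fin m → ℝ)
    -- Slater's condition
    (ubarS : ∀ i, Fin (n i) → ℝ)
    (hSlater : (∀ i, (F i).mulVec (ubarS i) ≤ g i ∧ ∀ j, h i (ubarS i) j < 0) ∧
      ∑ i, (E i).mulVec (ubarS i) = d)
    -- the primal problem has an optimal solution
    (uopt : ∀ i, Fin (n i) → ℝ)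
    (hopt : (∀ i, uopt i ∈ K i) ∧ (∑ i, (E i).mulVec (uopt i) = d) ∧
      ∀ u : ∀ i, Fin (n i) → ℝ, (∀ i, u i ∈ K i) → ∑ i, (E i).mulVec (u i) = d →
        ∑ i, (c i (uopt i) + e i (uopt i)) ≤ ∑ i, (c i (u i) + e i (u i)))
    -- the dual function
    (D : (Fin m → ℝ) → ℝ)
    (hD : ∀ lam, D lam = sInf {y : ℝ | ∃ u : ∀ i, Fin (n i) → ℝ, (∀ i, u i ∈ K i) ∧
      y = (∑ i, (c i (u i) + e i (u i) + dotProduct lam ((E i).mulVec (u i))))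
            - dotProduct lam d})
    -- the bid–price iteration
    (lam : ℕ → Fin m → ℝ) (u : ℕ → ∀ i, Fin (n i) → ℝ)
    (hmem : ∀ k i, u k i ∈ K i)
    (hbid : ∀ k i, ∀ v ∈ K i,
      c i (u k i) + e i (u k i) + dotProduct (lam k) ((E i).mulVec (u k i)) ≤
        c i v + e i v + dotProduct (lam k) ((E i).mulVec v))
    (hprice : ∀ k, 1 ≤ k →
      lam (k + 1) = lam k + ((1 : ℝ) / k) • (∑ i, (E i).mulVec (u k i) - d)) :
    -- the prices converge to a maximizer of the dual function
    ∃ lamStar : Fin m → ℝ,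
      Tendsto lam atTop (nhds lamStar) ∧
      ∀ lam' : Fin m → ℝ, D lam' ≤ D lamStar := by
  classical
  obtain ⟨hSl, hSd⟩ := hSlater
  obtain ⟨hoK, hod, hoopt⟩ := hopt
  let f : (∀ i, Fin (n i) → ℝ) → ℝ := fun v => ∑ i, (c i (v i) + e i (v i))
  let R : (∀ i, Fin (n i) → ℝ) → Fin m → ℝ := fun v => ∑ i, (E i).mulVec (v i) - d
  set P : ℝ := f uopt with hPdef
  have hfcont : Continuous f := by
    refine continuous_finsetSum _ fun i _ => ?_
    exact ((hccont i).comp (continuous_apply i)).add ((hecont i).comp (continuous_apply i))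
  have hRcont : Continuous R := by
    refine Continuous.sub (continuous_finsetSum _ fun i _ => ?_) continuous_const
    exact continuous_const.matrix_mulVec (continuous_apply i)
  have hfconv : ConvexOn ℝ Set.univ f := by
    refine ⟨convex_univ, fun x _ y _ α β hα hβ hαβ => ?_⟩
    simp only [f, Pi.add_apply, Pi.smul_apply, Finset.smul_sum, ← Finset.sum_add_distrib]
    refine Finset.sum_le_sum fun i _ => ?_
    have h1 := (hc i).2 (Set.mem_univ (x i)) (Set.mem_univ (y i)) hα hβ hαβ
    have h2 := (he i).2 (Set.mem_univ (x i)) (Set.mem_univ (y i)) hα hβ hαβ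
    simp only [smul_eq_mul] at h1 h2 ⊢
    linarith
  have hLag : ∀ (l : Fin m → ℝ) (v : ∀ i, Fin (n i) → ℝ),
      (∑ i, (c i (v i) + e i (v i) + dotProduct l ((E i).mulVec (v i)))) - dotProduct l d
        = f v + dotProduct l (R v) := by
    intro l v
    simp only [f, R, dotProduct_sub, dotProduct_sum, Finset.sum_add_distrib]
    ring
  have hcpt : IsCompact {v : ∀ i, Fin (n i) → ℝ | ∀ i, v i ∈ K i} := by
    simpa [Set.pi] using isCompact_univ_pi hKcpt
  -- The Lagrangian is bounded below by compactness, so `sInf` is a genuine infimum here.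
  have hDle : ∀ l v, (∀ i, v i ∈ K i) → D l ≤ f v + dotProduct l (R v) := by
    intro l v hv
    rw [hD]
    refine csInf_le ?_ ⟨v, hv, (hLag l v).symm⟩
    have hc2 : Continuous fun v => f v + dotProduct l (R v) :=
      hfcont.add (continuous_const.dotProduct hRcont)
    obtain ⟨b, hb⟩ := (hcpt.image hc2).bddBelow
    refine ⟨b, ?_⟩
    rintro y ⟨v, hv, rfl⟩
    rw [hLag]
    exact hb ⟨v, hv, rfl⟩
  have hleD : ∀ l b, (∀ v, (∀ i, v i ∈ K i) → b ≤ f v + dotProduct l (R v)) → b ≤ D l := by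
    intro l b hb
    rw [hD]
    refine le_csInf ⟨_, uopt, hoK, rfl⟩ ?_
    rintro y ⟨v, hv, rfl⟩
    rw [hLag]
    exact hb v hv
  have hDP : ∀ l, D l ≤ P := by
    intro l
    have h1 := hDle l uopt hoK
    have h2 : R uopt = 0 := by simp only [R, hod, sub_self]
    simpa [h2] using h1
  have hDk : ∀ k, D (lam k) = f (u k) + dotProduct (lam k) (R (u k)) := by
    intro k
    refine le_antisymm (hDle _ _ (hmem k)) (hleD _ _ fun v hv => ?_)
    rw [← hLag, ← hLag]
    exact sub_le_sub_right (Finset.sum_le_sum fun i _ => hbid k i (v i) (hv i)) _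
  -- A Lagrange multiplier of the coupling constraint attains the dual value `P`.
  obtain ⟨l₀, hl₀⟩ : ∃ l : Fin m → ℝ, P ≤ D l := by
    let pr : ∀ i, (∀ i, Fin (n i) → ℝ) →ₗ[ℝ] (Fin (n i) → ℝ) := fun i => LinearMap.proj i
    have hAval : ∀ (k : Fin m) (v : ∀ i, Fin (n i) → ℝ),
        (∑ i, (LinearMap.proj k).comp ((E i).mulVecLin.comp (pr i)) : _ →ₗ[ℝ] ℝ) v
          = (∑ i, (E i).mulVec (v i)) k := by
      intro k v
      simp [pr, LinearMap.sum_apply, Finset.sum_apply]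
    obtain ⟨l, hl⟩ := exists_multiplier (I := Σ i, Fin (q i)) (J := Σ i, Fin (p i)) (κ := Fin m)
      f hfconv hfcont (fun j v => h j.1 (v j.1) j.2)
      (fun j => ⟨convex_univ, fun x _ y _ α β hα hβ hαβ =>
        (hh j.1 j.2).2 (Set.mem_univ (x j.1)) (Set.mem_univ (y j.1)) hα hβ hαβ⟩)
      (fun j => (continuous_apply j.2).comp ((hhcont j.1).comp (continuous_apply j.1)))
      (fun i => (LinearMap.proj i.2).comp ((F i.1).mulVecLin.comp (pr i.1)))
      (fun i => g i.1 i.2)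
      (fun k => ∑ i, (LinearMap.proj k).comp ((E i).mulVecLin.comp (pr i))) d
      ubarS (fun i => (hSl i.1).1 i.2) (fun j => (hSl j.1).2 j.2)
      (fun k => by rw [hAval, hSd]) P
      (fun v hF hh' hE => hoopt v (fun i => by
          rw [hK]
          exact ⟨fun a => hF ⟨i, a⟩, fun b => hh' ⟨i, b⟩⟩)
        (funext fun k => by rw [← hAval, hE]))
    refine ⟨l, hleD _ _ fun v hv => ?_⟩
    have hv' : ∀ i, (F i).mulVec (v i) ≤ g i ∧ h i (v i) ≤ 0 := fun i => by
      have := hv i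
      rwa [hK] at this
    have h1 := hl v (fun i => (hv' i.1).1 i.2) (fun j => (hv' j.1).2 j.2)
    simp only [hAval] at h1
    exact h1
  -- The residuals are bounded since `R` is continuous on the compact feasible set.
  obtain ⟨B, hB⟩ := (hcpt.image ((PiLp.continuous_toLp 2 _).comp hRcont)).isBounded.exists_norm_le
  obtain ⟨z, hz, hlim⟩ := subgradient_tendsto (X := EuclideanSpace ℝ (Fin m))
    (fun k => WithLp.toLp 2 (lam k)) (fun k => WithLp.toLp 2 (R (u k)))
    (fun k => P - D (lam k)) {z | P ≤ D (WithLp.ofLp z)} (B ^ 2)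
    (fun k hk => by
      rw [hprice k hk]
      rfl)
    (fun k => pow_le_pow_left₀ (norm_nonneg _) (hB _ ⟨u k, hmem k, rfl⟩) 2)
    (fun k => sub_nonneg.2 (hDP _))
    (fun z hz k => by
      have h1 : P ≤ D (WithLp.ofLp z) := hz
      have h2 := hDle (WithLp.ofLp z) (u k) (hmem k)
      have h3 : inner ℝ (z - WithLp.toLp 2 (lam k)) (WithLp.toLp 2 (R (u k)))
          = dotProduct (WithLp.ofLp z) (R (u k)) - dotProduct (lam k) (R (u k)) := by
        rw [inner_sub_left, dotProduct_comm, dotProduct_comm (lam k)]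
        rfl
      rw [h3, hDk]
      linarith)
    ⟨WithLp.toLp 2 l₀, hl₀⟩
    (fun φ z hδ hx => by
      -- `D` is an infimum of functions affine in the price, hence upper semicontinuous.
      refine hleD _ _ fun v hv => ?_
      have hx' : Tendsto (fun k => lam (φ k)) atTop (nhds (WithLp.ofLp z)) :=
        ((PiLp.continuous_ofLp 2 _).tendsto z).comp hx
      have h1 : Tendsto (fun k => f v + dotProduct (lam (φ k)) (R v)) atTop
          (nhds (f v + dotProduct (WithLp.ofLp z) (R v))) := by
        have hc3 : Continuous fun l : Fin m → ℝ => f v + dotProduct l (R v) :=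
          continuous_const.add (continuous_id.dotProduct continuous_const)
        exact (hc3.tendsto _).comp hx'
      have h2 : Tendsto (fun k => D (lam (φ k))) atTop (nhds P) := by
        have := hδ.const_sub P
        simpa using this
      exact le_of_tendsto_of_tendsto' h2 h1 fun k => hDle _ _ hv)
  refine ⟨WithLp.ofLp z, ((PiLp.continuous_ofLp 2 _).tendsto z).comp hlim, fun l => ?_⟩
  exact (hDP l).trans hz
end

section
/- (Theorem, bid–multiple-price iteration under N linear constraints: deterministic per-time convergence.) Fix a time s and horizon T. Let each agent i = 1,…,M have deterministic dynamics x_i(t+1) = A_i x_i(t) + B_i u_i(t) for s ≤ t ≤ T−1 with given x_i(s), cost Σ_{t=s}^{T−1} [x_i(t)ᵀQ_ix_i(t) + u_i(t)ᵀR_iu_i(t) + Σ_{n=1}^N λ_n(t) γ_{i,n} u_i(t)] for announced price sequences λ_n(·), where Q_i is symmetric positive semidefinite, R_i symmetric positive definite, and γ_{i,n} ∈ ℝ. Suppose the matrix of the constraints Σ_{i=1}^M γ_{i,n} u_i(t) = 0 (n = 1,…,N, s ≤ t ≤ T−1) has full row rank as a linear map on the joint input sequence, and the constrained problem min Σ_{i,t}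 [x_i(t)ᵀQ_ix_i(t) + u_i(t)ᵀR_iu_i(t)] subject to the dynamics and Σ_i γ_{i,n}u_i(t) = 0 for all n, t is feasible. If at iterate k each agent returns its unique optimal input sequence u_i^k(·) for its own problem given prices λ^k_n(·), and the ISO updates λ^{k+1}_n(t) = λ^k_n(t) + α^k Σ_{i=1}^M γ_{i,n} u_i^k(t) with α^k > 0, α^k → 0, Σ_k α^k = ∞, then the prices converge to the unique dual-optimal price sequences λ*_n(·) and the bids converge to the unique optimal solution of the constrained problem. -/
/-! The state at each time is an affine function of the inputs, so the total cost is
`F u = b u u + l u + c` with `b` a symmetric positive definite form (`R i ≻ 0`), and the priced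
cost is `F u + d lam (C u)` with `C` the constraint map and `d` the dot product on prices.

The rest is linear algebra (`dual_ascent`). Represent `v ↦ d lam (C v)` as `b (G lam)` and `l` as
`-2 b a`. Completing the square, the priced cost is minimized exactly at `a - (1/2) G lam`, and the
dual function equals `c - b (a - (1/2) G lam) (a - (1/2) G lam)`. Since `C` is surjective,
`S = C ∘ G` is positive definite for `d`, so there is a unique `lamStar` whose bid
`uStar = a - (1/2) G lamStar` satisfies `C uStar = 0`; orthogonality `b uStar (G e) = d e (C uStar) = 0`
gives dual optimality, and the completed square gives primal optimality.

The price error obeys `e (k + 1) = e k - (α k / 2) S (e k)`, so once `α k` is small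
`d e e` contracts by a factor `1 - μ α k`; as `∑ α k = ∞` the product of these factors tends to `0`
(`tendsto_zero_of_contract`). -/

open Matrix Filter

/-- The state trajectory of a deterministic linear system, started at time `s` from
state `xs`; `traj A B xs u k` is the state at time `s + k` when input `u k` is applied
at time `s + k`. -/
noncomputable def traj {dX p : ℕ} (A : Matrix (Fin dX) (Fin dX) ℝ)
    (B : Matrix (Fin dX) (Fin p) ℝ) (xs : Fin dX → ℝ) (u : ℕ → Fin p → ℝ) :
    ℕ → Fin dX → ℝ
  | 0 => xs
  | k + 1 => A.mulVec (traj A B xs u k) + B.mulVec (u k)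

/-- Extension of a finite-horizon input trajectory to all times (by zero). -/
noncomputable def ext {p Tlen : ℕ} (u : Fin Tlen → Fin p → ℝ) : ℕ → Fin p → ℝ :=
  fun t => if h : t < Tlen then u ⟨t, h⟩ else 0

/-- A nonnegative sequence contracted by factors `1 - μ α k`, with `α` positive and not
summable, tends to zero, because `1 - x ≤ exp (-x)`. -/
lemma tendsto_zero_of_contract (α V : ℕ → ℝ) (μ : ℝ) (hμ : 0 < μ) (hα : ∀ k, 0 < α k)
    (hns : ¬ Summable α) (hV : ∀ k, 0 ≤ V k)
    (hstep : ∀ᶠ k in atTop, V (k + 1) ≤ (1 - μ * α k) * V k) :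
    Tendsto V atTop (nhds 0) := by
  obtain ⟨n0, hn0⟩ := eventually_atTop.1 hstep
  have hS : Tendsto (fun n => ∑ k ∈ Finset.range n, α k) atTop atTop :=
    (not_summable_iff_tendsto_nat_atTop_of_nonneg fun k => (hα k).le).1 hns
  have key : ∀ n ≥ n0, V n ≤ V n0 * Real.exp
      (-(μ * (∑ k ∈ Finset.range n, α k - ∑ k ∈ Finset.range n0, α k))) := by
    intro n hn
    induction n, hn using Nat.le_induction with
    | base => simp
    | succ n hn ih =>
      have h1 : 1 - μ * α n ≤ Real.exp (-(μ * α n)) := by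
        have := Real.add_one_le_exp (-(μ * α n)); linarith
      calc V (n + 1) ≤ (1 - μ * α n) * V n := hn0 n hn
        _ ≤ Real.exp (-(μ * α n)) * V n := mul_le_mul_of_nonneg_right h1 (hV n)
        _ ≤ Real.exp (-(μ * α n)) * _ := mul_le_mul_of_nonneg_left ih (Real.exp_pos _).le
        _ = _ := by
          rw [mul_left_comm, ← Real.exp_add, Finset.sum_range_succ]
          congr 2; ring
  have hlim : Tendsto (fun n => V n0 * Real.exp
      (-(μ * (∑ k ∈ Finset.range n, α k - ∑ k ∈ Finset.range n0, α k)))) atTop (nhds 0) := by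
    rw [← mul_zero (V n0)]
    refine Tendsto.const_mul _ (Real.tendsto_exp_neg_atTop_nhds_zero.comp ?_)
    exact (tendsto_atTop_add_const_right _ _ hS).const_mul_atTop hμ
  exact squeeze_zero' (Eventually.of_forall hV) (eventually_atTop.2 ⟨n0, key⟩) hlim

section Forms

variable {E : Type*} [NormedAddCommGroup E] [NormedSpace ℝ E] [FiniteDimensional ℝ E]

lemma form_continuous (b : E →ₗ[ℝ] E →ₗ[ℝ] ℝ) : Continuous fun x => b x x := by
  have h : Continuous fun x => LinearMap.toContinuousLinearMap (b x) :=
    ((LinearMap.toContinuousLinearMap : (E →ₗ[ℝ] ℝ) ≃ₗ[ℝ] (E →L[ℝ] ℝ)).toLinearMap ∘ₗ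
      b).continuous_of_finiteDimensional
  exact h.clm_apply continuous_id

/-- A positive definite form dominates any other quadratic form up to a positive constant, by
compactness of the unit sphere. -/
lemma form_dominates (b f : E →ₗ[ℝ] E →ₗ[ℝ] ℝ) (hb : ∀ x, x ≠ 0 → 0 < b x x) :
    ∃ K : ℝ, 0 < K ∧ ∀ x, f x x ≤ K * b x x := by
  have : ProperSpace E := FiniteDimensional.proper ℝ E
  have hne : ∀ x ∈ Metric.sphere (0 : E) 1, x ≠ 0 := by
    rintro x hx rfl; simp at hx
  have hcont : ContinuousOn (fun x => f x x / b x x) (Metric.sphere (0 : E) 1) :=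
    (form_continuous f).continuousOn.div (form_continuous b).continuousOn
      fun x hx => (hb x (hne x hx)).ne'
  obtain ⟨K, hK⟩ := (isCompact_sphere (0 : E) 1).bddAbove_image hcont
  refine ⟨max K 1, by positivity, fun x => ?_⟩
  rcases eq_or_ne x 0 with rfl | hx
  · simp
  have hn : 0 < ‖x‖ := norm_pos_iff.2 hx
  have hy : ‖x‖⁻¹ • x ∈ Metric.sphere (0 : E) 1 := by
    simp [norm_smul, hn.ne']
  have h1 : f x x / b x x ≤ K := by
    have := hK ⟨_, hy, rfl⟩
    simp only [map_smul, LinearMap.smul_apply, smul_eq_mul] at this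
    rwa [mul_div_mul_left _ _ (inv_pos.2 hn).ne', mul_div_mul_left _ _ (inv_pos.2 hn).ne'] at this
  exact (div_le_iff₀ (hb x hx)).1 (h1.trans (le_max_left _ _))

lemma tendsto_zero_of_form (b : E →ₗ[ℝ] E →ₗ[ℝ] ℝ) (hb : ∀ x, x ≠ 0 → 0 < b x x)
    (e : ℕ → E) (he : Tendsto (fun k => b (e k) (e k)) atTop (nhds 0)) :
    Tendsto e atTop (nhds 0) := by
  have : ProperSpace E := FiniteDimensional.proper ℝ E
  -- On the sphere of radius 1 the form has a positive minimum.
  have hK : ∃ K : ℝ, 0 < K ∧ ∀ x, ‖x‖ ^ 2 ≤ K * b x x := by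
    have hne : ∀ x ∈ Metric.sphere (0 : E) 1, x ≠ 0 := by
      rintro x hx rfl; simp at hx
    have hcont : ContinuousOn (fun x => (b x x)⁻¹) (Metric.sphere (0 : E) 1) :=
      (form_continuous b).continuousOn.inv₀ fun x hx => (hb x (hne x hx)).ne'
    obtain ⟨K, hK⟩ := (isCompact_sphere (0 : E) 1).bddAbove_image hcont
    refine ⟨max K 1, by positivity, fun x => ?_⟩
    rcases eq_or_ne x 0 with rfl | hx
    · simp
    have hn : 0 < ‖x‖ := norm_pos_iff.2 hx
    have hy : ‖x‖⁻¹ • x ∈ Metric.sphere (0 : E) 1 := by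
      simp [norm_smul, hn.ne']
    have h1 : ‖x‖ ^ 2 / b x x ≤ K := by
      have := hK ⟨_, hy, rfl⟩
      simp only [map_smul, LinearMap.smul_apply, smul_eq_mul] at this
      rw [mul_inv, mul_inv, inv_inv] at this
      rwa [div_eq_mul_inv, sq, mul_assoc]
    exact (div_le_iff₀ (hb x hx)).1 (h1.trans (le_max_left _ _))
  obtain ⟨K, -, hK⟩ := hK
  have h2 : Tendsto (fun k => ‖e k‖ ^ 2) atTop (nhds 0) :=
    squeeze_zero (fun k => by positivity) (fun k => hK (e k)) (by simpa using he.const_mul K)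
  have h3 := h2.sqrt
  simp only [Real.sqrt_sq (norm_nonneg _), Real.sqrt_zero] at h3
  exact tendsto_zero_iff_norm_tendsto_zero.2 h3

end Forms

/-- Dual gradient ascent for a strictly convex quadratic program with surjective constraint map
`C`, where `D` is the dual function and `d` the pairing of prices with constraint values. -/
lemma dual_ascent {U P : Type*} [NormedAddCommGroup U] [NormedSpace ℝ U] [FiniteDimensional ℝ U]
    [NormedAddCommGroup P] [NormedSpace ℝ P] [FiniteDimensional ℝ P]
    (b : U →ₗ[ℝ] U →ₗ[ℝ] ℝ) (hbs : ∀ x y, b x y = b y x) (hb : ∀ x, x ≠ 0 → 0 < b x x)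
    (l : U →ₗ[ℝ] ℝ) (c : ℝ)
    (d : P →ₗ[ℝ] P →ₗ[ℝ] ℝ) (hds : ∀ x y, d x y = d y x) (hd : ∀ x, x ≠ 0 → 0 < d x x)
    (C : U →ₗ[ℝ] P) (hC : Function.Surjective C)
    (F : U → ℝ) (hF : ∀ u, F u = b u u + l u + c)
    (D : P → ℝ) (hD : ∀ lam, D lam = sInf {y | ∃ u, y = F u + d lam (C u)})
    (α : ℕ → ℝ) (hαpos : ∀ k, 0 < α k) (hα0 : Tendsto α atTop (nhds 0)) (hαns : ¬ Summable α)
    (lam : ℕ → P) (u : ℕ → U)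
    (hbid : ∀ k v, F (u k) + d (lam k) (C (u k)) ≤ F v + d (lam k) (C v))
    (hprice : ∀ k, lam (k + 1) = lam k + α k • C (u k)) :
    ∃ (lamStar : P) (uStar : U),
      Tendsto lam atTop (nhds lamStar) ∧ Tendsto u atTop (nhds uStar) ∧
      (∀ lam', lam' ≠ lamStar → D lam' < D lamStar) ∧ C uStar = 0 ∧
      (∀ v, C v = 0 → v ≠ uStar → F uStar < F v) := by
  have hb0 : ∀ x, 0 ≤ b x x := fun x => by
    rcases eq_or_ne x 0 with rfl | hx
    · simp
    · exact (hb x hx).le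
  have hbz : ∀ x, b x x ≤ 0 → x = 0 := fun x hx => by
    by_contra h; exact (hb x h).not_ge hx
  have hd0 : ∀ x, 0 ≤ d x x := fun x => by
    rcases eq_or_ne x 0 with rfl | hx
    · simp
    · exact (hd x hx).le
  have hinj : Function.Injective b := by
    rw [injective_iff_map_eq_zero]
    intro x hx
    exact hbz x (by simp [hx])
  -- Riesz representation with respect to `b`.
  let r : U ≃ₗ[ℝ] Module.Dual ℝ U :=
    LinearMap.linearEquivOfInjective b hinj Subspace.dual_finrank_eq.symm
  have hr : ∀ f v, b (r.symm f) v = f v := fun f v => by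
    have : r (r.symm f) = f := r.apply_symm_apply f
    exact congrArg (fun g : Module.Dual ℝ U => g v) this
  let G : P →ₗ[ℝ] U := r.symm.toLinearMap ∘ₗ d.compl₂ C
  have hG : ∀ x v, b (G x) v = d x (C v) := fun x v => by simp [G, hr]
  obtain ⟨a, ha⟩ : ∃ a, ∀ v, b a v = -(1/2) * l v :=
    ⟨r.symm ((-(1/2) : ℝ) • l), fun v => by simp [hr]⟩
  have hsq : ∀ x w, F w + d x (C w) =
      b (w - (a - (1/2 : ℝ) • G x)) (w - (a - (1/2 : ℝ) • G x)) +
        (c - b (a - (1/2 : ℝ) • G x) (a - (1/2 : ℝ) • G x)) := by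
    intro x w
    have h1 := ha w
    have h2 := hG x w
    have h3 := hbs w a
    have h4 := hbs w (G x)
    rw [hF]
    simp only [map_sub, map_smul, LinearMap.sub_apply, LinearMap.smul_apply, smul_eq_mul]
    linarith
  have hDval : ∀ x, D x = c - b (a - (1/2 : ℝ) • G x) (a - (1/2 : ℝ) • G x) := by
    intro x
    rw [hD]
    refine IsLeast.csInf_eq ⟨⟨a - (1/2 : ℝ) • G x, by rw [hsq]; simp⟩, ?_⟩
    rintro y ⟨w, rfl⟩
    rw [hsq]
    linarith [hb0 (w - (a - (1/2 : ℝ) • G x))]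
  have hu : ∀ k, u k = a - (1/2 : ℝ) • G (lam k) := by
    intro k
    have h := hbid k (a - (1/2 : ℝ) • G (lam k))
    rw [hsq, hsq _ (a - _)] at h
    simp only [sub_self, map_zero] at h
    exact sub_eq_zero.1 (hbz _ (by linarith))
  let S : P →ₗ[ℝ] P := C ∘ₗ G
  have hGinj : ∀ x, x ≠ 0 → G x ≠ 0 := by
    intro x hx h
    obtain ⟨v, hv⟩ := hC x
    have h1 := hG x v
    rw [h, hv] at h1
    exact (hd x hx).ne (by simpa using h1)
  have hSd : ∀ x, d x (S x) = b (G x) (G x) := fun x => (hG x (G x)).symm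
  have hSinj : Function.Injective S := by
    rw [injective_iff_map_eq_zero]
    intro x hx
    by_contra h
    have h1 := hSd x
    rw [hx, map_zero] at h1
    exact (hb _ (hGinj x h)).ne h1
  obtain ⟨ls, hls⟩ := (LinearMap.injective_iff_surjective.1 hSinj) ((2 : ℝ) • C a)
  have hCus : C (a - (1/2 : ℝ) • G ls) = 0 := by
    have h1 : C (G ls) = (2 : ℝ) • C a := hls
    rw [map_sub, map_smul, h1, smul_smul]; norm_num
  have hlam : Tendsto lam atTop (nhds ls) := by
    have hrec : ∀ k, lam (k + 1) - ls = (lam k - ls) - (α k / 2) • S (lam k - ls) := by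
      intro k
      have h1 : C (u k) = -((1/2 : ℝ) • S (lam k - ls)) := by
        rw [hu, map_sub S, hls, map_sub, map_smul, smul_sub, smul_smul]
        norm_num [S]
      rw [hprice, h1, smul_neg, smul_smul]
      rw [show α k * (1/2) = α k / 2 by ring]
      abel
    let B : P →ₗ[ℝ] P →ₗ[ℝ] ℝ := b.compl₁₂ G G
    let B2 : P →ₗ[ℝ] P →ₗ[ℝ] ℝ := d.compl₁₂ S S
    obtain ⟨K, hK, hKd⟩ := form_dominates B d fun x hx => by
      simpa [B] using hb _ (hGinj x hx)
    obtain ⟨L, hL, hLd⟩ := form_dominates B B2 fun x hx => by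
      simpa [B] using hb _ (hGinj x hx)
    have hV : Tendsto (fun k => d (lam k - ls) (lam k - ls)) atTop (nhds 0) := by
      refine tendsto_zero_of_contract α _ (1 / (2 * K)) (by positivity) hαpos hαns
        (fun k => hd0 _) ?_
      filter_upwards [hα0.eventually (gt_mem_nhds (show (0 : ℝ) < 2 / L by positivity))] with k hk
      rw [hrec]
      generalize lam k - ls = e
      have h1 : d e (S e) = B e e := by rw [hSd]; simp [B]
      have h2 : d (S e) e = B e e := by rw [hds, h1]
      have h3 : d (S e) (S e) ≤ L * B e e := by simpa [B2] using hLd e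
      have h4 := hKd e
      have hp := hαpos k
      have hk' : α k * L < 2 := (lt_div_iff₀ hL).1 hk
      have hB : 0 ≤ B e e := by simpa [B] using hb0 (G e)
      simp only [map_sub, map_smul, LinearMap.sub_apply, LinearMap.smul_apply, smul_eq_mul, h1, h2]
      have h5 : α k ^ 2 * d (S e) (S e) ≤ 2 * (α k * B e e) :=
        calc α k ^ 2 * d (S e) (S e) ≤ α k ^ 2 * (L * B e e) := by gcongr
          _ = (α k * L) * (α k * B e e) := by ring
          _ ≤ 2 * (α k * B e e) := by gcongr
      have h6 : 1 / (2 * K) * α k * d e e ≤ 1 / 2 * (α k * B e e) :=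
        calc 1 / (2 * K) * α k * d e e ≤ 1 / (2 * K) * α k * (K * B e e) := by gcongr
          _ = _ := by field_simp
      nlinarith
    simpa using (tendsto_zero_of_form d hd _ hV).add_const ls
  refine ⟨ls, a - (1/2 : ℝ) • G ls, hlam, ?_, ?_, hCus, ?_⟩
  · rw [funext hu]
    exact tendsto_const_nhds.sub
      (((G.continuous_of_finiteDimensional.tendsto ls).comp hlam).const_smul _)
  · intro x hx
    have hpos := hb _ (hGinj _ (sub_ne_zero.2 hx))
    have horth : b (G (x - ls)) (a - (1/2 : ℝ) • G ls) = 0 := by rw [hG, hCus, map_zero]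
    have h1 : a - (1/2 : ℝ) • G x = (a - (1/2 : ℝ) • G ls) - (1/2 : ℝ) • G (x - ls) := by
      rw [map_sub, smul_sub]; abel
    rw [hDval, hDval, h1]
    generalize a - (1/2 : ℝ) • G ls = w at *
    have h2 := hbs w (G (x - ls))
    generalize G (x - ls) = g at *
    simp only [map_sub, map_smul, LinearMap.sub_apply, LinearMap.smul_apply, smul_eq_mul]
    linarith
  · intro v hv hne
    have h1 := hsq ls v
    have h2 := hsq ls (a - (1/2 : ℝ) • G ls)
    rw [hv, map_zero, add_zero] at h1
    rw [hCus, map_zero, add_zero, sub_self, map_zero] at h2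
    have := hb _ (sub_ne_zero.2 hne)
    linarith

/-- The linear part of the state reached after `k` steps, as a function of the inputs. -/
noncomputable def trajLin {dX p Tlen : ℕ} (A : Matrix (Fin dX) (Fin dX) ℝ)
    (B : Matrix (Fin dX) (Fin p) ℝ) : ℕ → (Fin Tlen → Fin p → ℝ) →ₗ[ℝ] (Fin dX → ℝ)
  | 0 => 0
  | k + 1 => A.mulVecLin ∘ₗ trajLin A B k +
      B.mulVecLin ∘ₗ (if h : k < Tlen then LinearMap.proj ⟨k, h⟩ else 0)

lemma traj_eq {dX p Tlen : ℕ} (A : Matrix (Fin dX) (Fin dX) ℝ)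
    (B : Matrix (Fin dX) (Fin p) ℝ) (xs : Fin dX → ℝ) (u : Fin Tlen → Fin p → ℝ) (k : ℕ) :
    traj A B xs (ext u) k = trajLin A B k u + traj A B xs 0 k := by
  induction k with
  | zero => simp [traj, trajLin]
  | succ k ih =>
    simp only [traj, trajLin, ih, _root_.ext, Matrix.mulVec_add, LinearMap.add_apply,
      LinearMap.comp_apply, Matrix.mulVecLin_apply, Pi.zero_apply, Matrix.mulVec_zero]
    split_ifs with h <;> simp [add_right_comm]

/-- The bilinear form `x, y ↦ xᵀ W y`. -/
noncomputable def formOf {n : ℕ} (W : Matrix (Fin n) (Fin n) ℝ) :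
    (Fin n → ℝ) →ₗ[ℝ] (Fin n → ℝ) →ₗ[ℝ] ℝ :=
  LinearMap.mk₂ ℝ (fun x y => dotProduct x (W.mulVec y))
    (by intros; simp [add_dotProduct]) (by intros; simp [smul_dotProduct])
    (by intros; simp [Matrix.mulVec_add, dotProduct_add])
    (by intros; simp [Matrix.mulVec_smul, dotProduct_smul])

@[simp] lemma formOf_apply {n : ℕ} (W : Matrix (Fin n) (Fin n) ℝ) (x y : Fin n → ℝ) :
    formOf W x y = dotProduct x (W.mulVec y) := rfl

lemma formOf_symm {n : ℕ} (W : Matrix (Fin n) (Fin n) ℝ) (hW : W.IsHermitian)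
    (x y : Fin n → ℝ) : formOf W x y = formOf W y x := by
  have hT : Wᵀ = W := by
    have h := hW.eq
    rwa [Matrix.conjTranspose_eq_transpose_of_trivial] at h
  simp only [formOf_apply]
  rw [Matrix.dotProduct_mulVec, ← Matrix.mulVec_transpose, hT, dotProduct_comm]

/-- The unpriced cost of one agent is a quadratic function of its inputs whose quadratic part is
positive definite, with the dynamics substituted in. -/
lemma agent_quadratic {dX p Tlen : ℕ} (A : Matrix (Fin dX) (Fin dX) ℝ)
    (B : Matrix (Fin dX) (Fin p) ℝ) (xs : Fin dX → ℝ) (Q : Matrix (Fin dX) (Fin dX) ℝ)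
    (R : Matrix (Fin p) (Fin p) ℝ) (hQ : Q.PosSemidef) (hR : R.PosDef) :
    ∃ (b : (Fin Tlen → Fin p → ℝ) →ₗ[ℝ] (Fin Tlen → Fin p → ℝ) →ₗ[ℝ] ℝ)
      (l : (Fin Tlen → Fin p → ℝ) →ₗ[ℝ] ℝ) (c : ℝ),
      (∀ x y, b x y = b y x) ∧ (∀ x, x ≠ 0 → 0 < b x x) ∧
      ∀ u : Fin Tlen → Fin p → ℝ, ∑ t : Fin Tlen,
        (dotProduct (traj A B xs (ext u) (t : ℕ)) (Q.mulVec (traj A B xs (ext u) (t : ℕ)))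
          + dotProduct (u t) (R.mulVec (u t))) = b u u + l u + c := by
  refine ⟨∑ t : Fin Tlen, ((formOf Q).compl₁₂ (trajLin A B t) (trajLin A B t) +
      (formOf R).compl₁₂ (LinearMap.proj t) (LinearMap.proj t)),
    ∑ t : Fin Tlen, (2 : ℝ) • (formOf Q (traj A B xs 0 t)) ∘ₗ trajLin A B t,
    ∑ t : Fin Tlen, formOf Q (traj A B xs 0 t) (traj A B xs 0 t), ?_, ?_, ?_⟩
  · intro x y
    simp only [LinearMap.sum_apply, LinearMap.add_apply, LinearMap.compl₁₂_apply]
    refine Finset.sum_congr rfl fun t _ => ?_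
    rw [formOf_symm Q hQ.1, formOf_symm R hR.1]
  · intro x hx
    simp only [LinearMap.sum_apply, LinearMap.add_apply, LinearMap.compl₁₂_apply, formOf_apply,
      LinearMap.proj_apply]
    have hq : ∀ y, 0 ≤ dotProduct y (Q.mulVec y) := fun y => by
      simpa using hQ.dotProduct_mulVec_nonneg y
    have hr : ∀ y, y ≠ 0 → 0 < dotProduct y (R.mulVec y) := fun y hy => by
      simpa using hR.dotProduct_mulVec_pos hy
    have hr0 : ∀ y, 0 ≤ dotProduct y (R.mulVec y) := fun y => by
      simpa using hR.posSemidef.dotProduct_mulVec_nonneg y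
    obtain ⟨t, ht⟩ := Function.ne_iff.1 hx
    exact Finset.sum_pos' (fun t _ => add_nonneg (hq _) (hr0 _))
      ⟨t, Finset.mem_univ _, add_pos_of_nonneg_of_pos (hq _) (hr _ ht)⟩
  · intro u
    simp only [LinearMap.sum_apply, LinearMap.add_apply, LinearMap.compl₁₂_apply,
      LinearMap.proj_apply, LinearMap.smul_apply, LinearMap.comp_apply, smul_eq_mul,
      ← Finset.sum_add_distrib, ← formOf_apply]
    refine Finset.sum_congr rfl fun t _ => ?_
    rw [traj_eq]
    have := formOf_symm Q hQ.1 (trajLin A B t u) (traj A B xs 0 t)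
    simp only [map_add, LinearMap.add_apply]
    linarith

/-- Bid–multiple-price iteration under `N` linear constraints, deterministic per-time
convergence: at a fixed time `s` with horizon `T` (inputs indexed by the `Tlen = T - s`
remaining periods), if each agent's priced LQR subproblem is answered optimally and the
ISO performs gradient price updates `λ^{k+1}_n(t) = λ^k_n(t) + α^k Σᵢ γ_{i,n} uᵢᵏ(t)`
with diminishing nonsummable step sizes, then prices converge to the unique dual-optimal
prices and bids converge to the unique optimal solution of the constrained problem. -/
theorem stmt16 (M N p s T : ℕ) (hsT : s < T) (Tlen : ℕ) (hTlen : Tlen = T - s)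
    (dX : Fin M → ℕ)
    (A : ∀ i, Matrix (Fin (dX i)) (Fin (dX i)) ℝ)
    (B : ∀ i, Matrix (Fin (dX i)) (Fin p) ℝ)
    (xs : ∀ i, Fin (dX i) → ℝ)  -- the given states x_i(s)
    (Q : ∀ i, Matrix (Fin (dX i)) (Fin (dX i)) ℝ)
    (R : ∀ i, Matrix (Fin p) (Fin p) ℝ)
    (hQ : ∀ i, (Q i).PosSemidef) (hR : ∀ i, (R i).PosDef)
    (γ : Fin M → Fin N → ℝ)
    -- agent i's priced cost, given price sequences `lam n t` and input trajectory `ui`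
    (Jp : ∀ _ : Fin M, (Fin N → Fin Tlen → Fin p → ℝ) →
      (Fin Tlen → Fin p → ℝ) → ℝ)
    (hJp : ∀ i lam ui, Jp i lam ui = ∑ t : Fin Tlen,
      (dotProduct (traj (A i) (B i) (xs i) (ext ui) (t : ℕ))
          ((Q i).mulVec (traj (A i) (B i) (xs i) (ext ui) (t : ℕ)))
        + dotProduct (ui t) ((R i).mulVec (ui t))
        + ∑ nn : Fin N, dotProduct (lam nn t) (γ i nn • ui t)))
    -- the unpriced cost of agent i
    (J0 : ∀ _ : Fin M, (Fin Tlen → Fin p → ℝ) → ℝ)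
    (hJ0 : ∀ i ui, J0 i ui = Jp i 0 ui)
    -- the constraint map has full row rank on joint input sequences
    (hrank : Function.Surjective
      (fun u : Fin M → Fin Tlen → Fin p → ℝ =>
        fun q : Fin N × Fin Tlen => ∑ i, γ i q.1 • u i q.2))
    -- the constrained problem is feasible
    (hfeas : ∃ u : Fin M → Fin Tlen → Fin p → ℝ,
      ∀ (nn : Fin N) (t : Fin Tlen), ∑ i, γ i nn • u i t = 0)
    -- the dual function
    (D : (Fin N → Fin Tlen → Fin p → ℝ) → ℝ)
    (hD : ∀ lam, D lam = sInf {y : ℝ |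
      ∃ u : Fin M → Fin Tlen → Fin p → ℝ, y = ∑ i, Jp i lam (u i)})
    -- step sizes
    (α : ℕ → ℝ) (hαpos : ∀ k, 0 < α k)
    (hα0 : Tendsto α atTop (nhds 0)) (hαns : ¬ Summable α)
    -- the bid–multiple-price iteration
    (lam : ℕ → Fin N → Fin Tlen → Fin p → ℝ)
    (u : ℕ → Fin M → Fin Tlen → Fin p → ℝ)
    (hbid : ∀ k i, ∀ v : Fin Tlen → Fin p → ℝ, Jp i (lam k) (u k i) ≤ Jp i (lam k) v)
    (hprice : ∀ k (nn : Fin N) (t : Fin Tlen),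
      lam (k + 1) nn t = lam k nn t + α k • (∑ i, γ i nn • u k i t)) :
    ∃ (lamStar : Fin N → Fin Tlen → Fin p → ℝ)
      (uStar : Fin M → Fin Tlen → Fin p → ℝ),
      Tendsto lam atTop (nhds lamStar) ∧
      Tendsto u atTop (nhds uStar) ∧
      -- λ* is the unique dual-optimal price
      (∀ lam', lam' ≠ lamStar → D lam' < D lamStar) ∧
      -- u* is the unique optimal solution of the constrained problem
      (∀ (nn : Fin N) (t : Fin Tlen), ∑ i, γ i nn • uStar i t = 0) ∧
      (∀ v : Fin M → Fin Tlen → Fin p → ℝ,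
        (∀ (nn : Fin N) (t : Fin Tlen), ∑ i, γ i nn • v i t = 0) → v ≠ uStar →
        ∑ i, J0 i (uStar i) < ∑ i, J0 i (v i)) := by
  choose b l c hbs hb hq using fun i =>
    agent_quadratic (Tlen := Tlen) (A i) (B i) (xs i) (Q i) (R i) (hQ i) (hR i)
  have hJ0q : ∀ i v, J0 i v = b i v v + l i v + c i := by
    intro i v
    rw [hJ0, hJp, ← hq]
    simp
  let pr : ∀ _ : Fin M, (Fin M → Fin Tlen → Fin p → ℝ) →ₗ[ℝ] (Fin Tlen → Fin p → ℝ) :=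
    fun i => LinearMap.proj i
  let C : (Fin M → Fin Tlen → Fin p → ℝ) →ₗ[ℝ] (Fin N → Fin Tlen → Fin p → ℝ) :=
    LinearMap.pi fun nn => LinearMap.pi fun t =>
      ∑ i, γ i nn • ((LinearMap.proj t : (Fin Tlen → Fin p → ℝ) →ₗ[ℝ] (Fin p → ℝ)) ∘ₗ pr i)
  have hCapp : ∀ v nn t, C v nn t = ∑ i, γ i nn • v i t := by
    intro v nn t
    simp [C, pr]
  let pt : ∀ (_ : Fin N) (_ : Fin Tlen), (Fin N → Fin Tlen → Fin p → ℝ) →ₗ[ℝ] (Fin p → ℝ) :=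
    fun nn t => (LinearMap.proj t : (Fin Tlen → Fin p → ℝ) →ₗ[ℝ] (Fin p → ℝ)) ∘ₗ LinearMap.proj nn
  let d : (Fin N → Fin Tlen → Fin p → ℝ) →ₗ[ℝ] (Fin N → Fin Tlen → Fin p → ℝ) →ₗ[ℝ] ℝ :=
    ∑ nn, ∑ t, (formOf 1).compl₁₂ (pt nn t) (pt nn t)
  have hdapp : ∀ x y, d x y = ∑ nn, ∑ t, dotProduct (x nn t) (y nn t) := by
    intro x y
    simp [d, pt]
  have hcost : ∀ x (v : Fin M → Fin Tlen → Fin p → ℝ),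
      ∑ i, Jp i x (v i) = ∑ i, J0 i (v i) + d x (C v) := by
    intro x v
    have h1 : ∀ i, Jp i x (v i) =
        J0 i (v i) + ∑ nn, ∑ t, dotProduct (x nn t) (γ i nn • v i t) := by
      intro i
      rw [hJ0, hJp, hJp, Finset.sum_comm (s := (Finset.univ : Finset (Fin N))),
        ← Finset.sum_add_distrib]
      simp
    simp only [h1, Finset.sum_add_distrib, hdapp, hCapp, dotProduct_sum]
    congr 1
    rw [Finset.sum_comm]
    exact Finset.sum_congr rfl fun nn _ => Finset.sum_comm
  obtain ⟨ls, us, h1, h2, h3, h4, h5⟩ := dual_ascent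
    (∑ i, (b i).compl₁₂ (pr i) (pr i))
    (by
      intro x y
      simp only [LinearMap.sum_apply, LinearMap.compl₁₂_apply]
      exact Finset.sum_congr rfl fun i _ => hbs i _ _)
    (by
      intro x hx
      simp only [LinearMap.sum_apply, LinearMap.compl₁₂_apply]
      obtain ⟨i, hi⟩ := Function.ne_iff.1 hx
      refine Finset.sum_pos' (fun i _ => ?_) ⟨i, Finset.mem_univ _, hb i _ hi⟩
      rcases eq_or_ne (pr i x) 0 with h | h
      · simp [h]
      · exact (hb i _ h).le)
    (∑ i, l i ∘ₗ pr i) (∑ i, c i) d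
    (by
      intro x y
      simp only [hdapp, dotProduct_comm])
    (by
      intro x hx
      rw [hdapp]
      have h0 : ∀ w : Fin p → ℝ, 0 ≤ dotProduct w w := fun w =>
        Finset.sum_nonneg fun j _ => mul_self_nonneg _
      obtain ⟨nn, hnn⟩ := Function.ne_iff.1 hx
      obtain ⟨t, ht⟩ := Function.ne_iff.1 hnn
      refine Finset.sum_pos' (fun _ _ => Finset.sum_nonneg fun _ _ => h0 _)
        ⟨nn, Finset.mem_univ _, Finset.sum_pos' (fun _ _ => h0 _) ⟨t, Finset.mem_univ _, ?_⟩⟩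
      exact lt_of_le_of_ne (h0 _) fun h => ht (dotProduct_self_eq_zero.1 h.symm))
    C
    (by
      intro y
      obtain ⟨v, hv⟩ := hrank fun q => y q.1 q.2
      refine ⟨v, ?_⟩
      funext nn t
      rw [hCapp]
      exact congrFun hv (nn, t))
    (fun v => ∑ i, J0 i (v i))
    (by
      intro v
      simp only [hJ0q, Finset.sum_add_distrib, LinearMap.sum_apply, LinearMap.compl₁₂_apply,
        LinearMap.comp_apply]
      rfl)
    D (by intro x; simp only [hD, hcost]) α hαpos hα0 hαns lam u
    (by
      intro k v
      rw [← hcost, ← hcost]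
      exact Finset.sum_le_sum fun i _ => hbid k i (v i))
    (by
      intro k
      funext nn t
      rw [hprice, Pi.add_apply, Pi.add_apply, Pi.smul_apply, Pi.smul_apply, hCapp])
  refine ⟨ls, us, h1, h2, h3, fun nn t => ?_, fun v hv hne => h5 v ?_ hne⟩
  · rw [← hCapp, h4]; rfl
  · funext nn t
    rw [hCapp, hv]; rfl
end
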